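/- Let T be a finite tile set over a glue alphabet in which every glue has strength at most g, and let τ₁, τ₂, … be a sequence of nondecreasing temperature functions and k₁, k₂, … a sequence of pairwise distinct integers with kᵢ ≥ 2 such that for each i the size-dependent system (T, τᵢ) has at least one terminal supertile and self-assembles the kᵢ × kᵢ square. Define f(n) = infᵢ τᵢ(n). Then f(n) is not ω(√n); that is, it is not the case that for every real C > 0 there exists N such that (f(n) : ℝ) > C·√n for all n ≥ N. -/

import Mathlib

/-!
An assembly that admits no break has strength at least `τ (min a b)` across every cut into two
connected parts of sizes `a` and `b`. Cut a `k × k` square along a vertical line into its left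
`⌊k/2⌋` columns and the remaining ones. Only the `k` pairs of tiles facing each other across the
line can bond, so this cut has strength at most `g * k`, although its smaller part has
`n = ⌊k/2⌋ * k ≥ (k/2)²` tiles. Hence `τ n ≤ g * k ≤ 2 * g * √n`. As the squares get larger, such
`n` become arbitrarily large.
-/

/-- A tile type over glue alphabet `G`: four glues on the north, east, south,
and west edges. -/
structure Tile (G : Type) where
  north : G
  east : G
  south : G
  west : G

/-- Grid adjacency: two points of `ℤ²` at Euclidean distance 1. -/
def Adj (p q : ℤ × ℤ) : Prop :=
  (p.1 - q.1).natAbs + (p.2 - q.2).natAbs = 1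

/-- A set of grid points is connected under grid adjacency. -/
def ConnectedIn (S : Set (ℤ × ℤ)) : Prop :=
  ∀ p ∈ S, ∀ q ∈ S,
    Relation.ReflTransGen (fun a b => Adj a b ∧ a ∈ S ∧ b ∈ S) p q

/-- An assembly over the tile set `T`: a finite partial function from `ℤ²` to
tiles of `T` whose domain is connected under grid adjacency. -/
structure Assembly (G : Type) (T : Set (Tile G)) where
  tiles : ℤ × ℤ → Option (Tile G)
  dom : Finset (ℤ × ℤ)
  mem_dom : ∀ p, p ∈ dom ↔ (tiles p).isSome
  connected : ConnectedIn (↑dom : Set (ℤ × ℤ))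
  tiles_mem : ∀ p t, tiles p = some t → t ∈ T

/-- Strength of the bond between two abutting glues: the glues bond iff they
are equal, in which case the bond strength is the glue strength. -/
noncomputable def glueBond {G : Type} (str : G → ℕ) (a b : G) : ℕ := by
  classical
  exact if a = b then str a else 0

/-- The strength of the bond between a tile `t` at position `p` and a tile `u`
at position `q` (0 unless `p` and `q` are adjacent and the abutting glues
match). -/
noncomputable def tileBond {G : Type} (str : G → ℕ) (t u : Tile G) (p q : ℤ × ℤ) : ℕ :=
  if q = (p.1 + 1, p.2) then glueBond str t.east u.west
  else if q = (p.1 - 1, p.2) then glueBond str t.west u.east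
  else if q = (p.1, p.2 + 1) then glueBond str t.north u.south
  else if q = (p.1, p.2 - 1) then glueBond str t.south u.north
  else 0

/-- The strength of the bond between the tiles of `α` at positions `p`, `q`. -/
noncomputable def posBond {G : Type} {T : Set (Tile G)} (str : G → ℕ)
    (α : Assembly G T) (p q : ℤ × ℤ) : ℕ :=
  match α.tiles p, α.tiles q with
  | some t, some u => tileBond str t u p q
  | _, _ => 0

/-- The strength of the cut of `α` into the parts `A` and `B`: the total
strength of bonds between tiles in opposite parts. -/
noncomputable def cutStrength {G : Type} {T : Set (Tile G)} (str : G → ℕ)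
    (α : Assembly G T) (A B : Finset (ℤ × ℤ)) : ℕ :=
  ∑ p ∈ A, ∑ q ∈ B, posBond str α p q

/-- An assembly is `τ`-stable if every cut of it into two nonempty parts of
sizes `a` and `b` has strength at least `τ (min a b)`. -/
def IsStable {G : Type} {T : Set (Tile G)} (str : G → ℕ) (τ : ℕ → ℕ)
    (α : Assembly G T) : Prop :=
  ∀ A B : Finset (ℤ × ℤ), Disjoint A B → A ∪ B = α.dom →
    A.Nonempty → B.Nonempty →
    τ (min A.card B.card) ≤ cutStrength str α A B

/-- Two assemblies represent the same supertile iff one is a translate of the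
other. -/
def SameSupertile {G : Type} {T : Set (Tile G)} (α β : Assembly G T) : Prop :=
  ∃ v : ℤ × ℤ, ∀ p : ℤ × ℤ, β.tiles (p + v) = α.tiles p

/-- `γ` is the union of the disjoint assemblies `α` and `β`. -/
def IsUnionOf {G : Type} {T : Set (Tile G)} (γ α β : Assembly G T) : Prop :=
  Disjoint α.dom β.dom ∧ γ.dom = α.dom ∪ β.dom ∧
    (∀ p ∈ α.dom, γ.tiles p = α.tiles p) ∧
    (∀ p ∈ β.dom, γ.tiles p = β.tiles p)

/-- The supertiles of `α` and `β` combine into the supertile of `γ`: there are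
disjoint representatives whose union is a representative of `γ` such that the
cut between them has strength at least `τ` of the size of the smaller part. -/
def CombinesTo {G : Type} {T : Set (Tile G)} (str : G → ℕ) (τ : ℕ → ℕ)
    (α β γ : Assembly G T) : Prop :=
  ∃ α' β' γ' : Assembly G T, SameSupertile α α' ∧ SameSupertile β β' ∧
    SameSupertile γ γ' ∧ IsUnionOf γ' α' β' ∧
    τ (min α'.dom.card β'.dom.card) ≤ cutStrength str γ' α'.dom β'.dom

/-- The supertile of `γ` breaks into the supertiles of `α` and `β`: there are
disjoint representatives (each with connected domain, as all assemblies have)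
whose union is a representative of `γ` such that the cut between them has
strength strictly less than `τ` of the size of the smaller part. -/
def BreaksTo {G : Type} {T : Set (Tile G)} (str : G → ℕ) (τ : ℕ → ℕ)
    (γ α β : Assembly G T) : Prop :=
  ∃ α' β' γ' : Assembly G T, SameSupertile α α' ∧ SameSupertile β β' ∧
    SameSupertile γ γ' ∧ IsUnionOf γ' α' β' ∧
    cutStrength str γ' α'.dom β'.dom < τ (min α'.dom.card β'.dom.card)

/-- The producible supertiles of the size-dependent system `(T, τ)`:
supertiles of size 1, combinations of two producible supertiles, and
supertiles resulting from a break of a producible supertile. -/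
inductive Producible {G : Type} (str : G → ℕ) (T : Set (Tile G)) (τ : ℕ → ℕ) :
    Assembly G T → Prop
  | single (α : Assembly G T) : α.dom.card = 1 → Producible str T τ α
  | combine (α β γ : Assembly G T) : Producible str T τ α →
      Producible str T τ β → CombinesTo str τ α β γ → Producible str T τ γ
  | breakLeft (γ α β : Assembly G T) : Producible str T τ γ →
      BreaksTo str τ γ α β → Producible str T τ α
  | breakRight (γ α β : Assembly G T) : Producible str T τ γ →
      BreaksTo str τ γ α β → Producible str T τ β

/-- A producible supertile is terminal if it admits no combination with any
producible supertile and no break. -/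
def Terminal {G : Type} (str : G → ℕ) (T : Set (Tile G)) (τ : ℕ → ℕ)
    (α : Assembly G T) : Prop :=
  Producible str T τ α ∧
    (∀ β γ : Assembly G T, Producible str T τ β →
      ¬ CombinesTo str τ α β γ ∧ ¬ CombinesTo str τ β α γ) ∧
    (∀ β γ : Assembly G T, ¬ BreaksTo str τ α β γ)

/-- The system `(T, τ)` self-assembles the shape `P` if every terminal
supertile consists of assemblies whose domain is a translate of `P`. -/
def SelfAssembles {G : Type} (str : G → ℕ) (T : Set (Tile G)) (τ : ℕ → ℕ)
    (P : Set (ℤ × ℤ)) : Prop :=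
  ∀ α : Assembly G T, Terminal str T τ α →
    ∃ v : ℤ × ℤ, (↑α.dom : Set (ℤ × ℤ)) = (· + v) '' P

/-- The `w × h` rectangle `{1,…,w} × {1,…,h}`. -/
def rect (w h : ℕ) : Set (ℤ × ℤ) :=
  {p | 1 ≤ p.1 ∧ p.1 ≤ (w : ℤ) ∧ 1 ≤ p.2 ∧ p.2 ≤ (h : ℤ)}

lemma reflTransGen_natAbs_sub_eq_one (s : Set ℤ) [s.OrdConnected] {x y : ℤ}
    (hx : x ∈ s) (hy : y ∈ s) :
    Relation.ReflTransGen (fun a b => (a - b).natAbs = 1 ∧ a ∈ s ∧ b ∈ s) x y := by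
  refine reflTransGen_of_succ _ (fun a ha => ?_) (fun a ha => ?_) <;>
    rw [Order.succ_eq_add_one] <;> rw [Set.mem_Ico] at ha
  · exact ⟨by omega, s.Icc_subset hx hy ⟨by omega, by omega⟩,
      s.Icc_subset hx hy ⟨by omega, by omega⟩⟩
  · exact ⟨by omega, s.Icc_subset hy hx ⟨by omega, by omega⟩,
      s.Icc_subset hy hx ⟨by omega, by omega⟩⟩

lemma connectedIn_prod (s t : Set ℤ) [s.OrdConnected] [t.OrdConnected] :
    ConnectedIn (s ×ˢ t) := by
  rintro ⟨x, y⟩ ⟨hx, hy⟩ ⟨x', y'⟩ ⟨hx', hy'⟩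
  have horizontal := (reflTransGen_natAbs_sub_eq_one s hx hx').lift (·, y)
    (p := fun a b => Adj a b ∧ a ∈ s ×ˢ t ∧ b ∈ s ×ˢ t)
    fun a b ⟨hab, ha, hb⟩ => ⟨by simpa [Adj] using hab, ⟨ha, hy⟩, ⟨hb, hy⟩⟩
  have vertical := (reflTransGen_natAbs_sub_eq_one t hy hy').lift (x', ·)
    (p := fun a b => Adj a b ∧ a ∈ s ×ˢ t ∧ b ∈ s ×ˢ t)
    fun a b ⟨hab, ha, hb⟩ => ⟨by simpa [Adj] using hab, ⟨hx', ha⟩, ⟨hx', hb⟩⟩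
  exact horizontal.trans vertical

lemma image_add_rect (v : ℤ × ℤ) (w h : ℕ) :
    (· + v) '' rect w h = Set.Icc (v.1 + 1) (v.1 + w) ×ˢ Set.Icc (v.2 + 1) (v.2 + h) := by
  ext p
  simp only [Set.image_add_right, Set.mem_preimage, rect, Set.mem_ofPred_eq, Set.mem_prod,
    Set.mem_Icc, Prod.fst_add, Prod.snd_add, Prod.fst_neg, Prod.snd_neg]
  omega

section

variable {G : Type} {T : Set (Tile G)} {str : G → ℕ} {g : ℕ}

instance : DecidableRel Adj := fun _ _ => inferInstanceAs (Decidable (_ = _))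

lemma glueBond_le (hg : ∀ a, str a ≤ g) (a b : G) : glueBond str a b ≤ g := by
  unfold glueBond
  split_ifs
  exacts [hg a, g.zero_le]

lemma tileBond_le (hg : ∀ a, str a ≤ g) (t u : Tile G) (p q : ℤ × ℤ) :
    tileBond str t u p q ≤ g := by
  unfold tileBond
  split_ifs
  exacts [glueBond_le hg _ _, glueBond_le hg _ _, glueBond_le hg _ _, glueBond_le hg _ _,
    g.zero_le]

lemma tileBond_eq_zero_of_not_adj (t u : Tile G) {p q : ℤ × ℤ} (h : ¬ Adj p q) :
    tileBond str t u p q = 0 := by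
  unfold tileBond
  split_ifs <;> simp_all [Adj]

lemma posBond_le (hg : ∀ a, str a ≤ g) (α : Assembly G T) (p q : ℤ × ℤ) :
    posBond str α p q ≤ if Adj p q then g else 0 := by
  unfold posBond
  split
  · split_ifs with h
    · exact tileBond_le hg ..
    · exact (tileBond_eq_zero_of_not_adj _ _ h).le
  · exact Nat.zero_le _

lemma cutStrength_le_mul_card_adj (hg : ∀ a, str a ≤ g) (α : Assembly G T)
    (A B : Finset (ℤ × ℤ)) :
    cutStrength str α A B ≤ g * {e ∈ A ×ˢ B | Adj e.1 e.2}.card :=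
  calc cutStrength str α A B
      = ∑ e ∈ A ×ˢ B, posBond str α e.1 e.2 := (Finset.sum_product' ..).symm
    _ ≤ ∑ e ∈ A ×ˢ B, if Adj e.1 e.2 then g else 0 :=
        Finset.sum_le_sum fun e _ => posBond_le hg α e.1 e.2
    _ = g * {e ∈ A ×ˢ B | Adj e.1 e.2}.card := by
        rw [← Finset.sum_filter, Finset.sum_const, smul_eq_mul, mul_comm]

lemma card_adj_le_card_image_snd {A B : Finset (ℤ × ℤ)} {m : ℤ}
    (hA : ∀ p ∈ A, p.1 ≤ m) (hB : ∀ q ∈ B, m < q.1) :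
    {e ∈ A ×ˢ B | Adj e.1 e.2}.card ≤ (A.image Prod.snd).card := by
  have facing : ∀ e ∈ ({e ∈ A ×ˢ B | Adj e.1 e.2} : Finset _),
      e.1.1 = m ∧ e.2.1 = m + 1 ∧ e.2.2 = e.1.2 := by
    intro e he
    obtain ⟨hmem, hadj⟩ := Finset.mem_filter.1 he
    obtain ⟨hp, hq⟩ := Finset.mem_product.1 hmem
    have := hA _ hp
    have := hB _ hq
    unfold Adj at hadj
    omega
  refine Finset.card_le_card_of_injOn (fun e => e.1.2) (fun e he => ?_)
    fun e he e' he' hee' => ?_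
  · exact Finset.mem_image_of_mem _ (Finset.mem_product.1 (Finset.mem_filter.1 he).1).1
  · have := facing e he
    have := facing e' he'
    ext <;> grind

lemma cutStrength_le_mul_card_image_snd (hg : ∀ a, str a ≤ g) (α : Assembly G T)
    {A B : Finset (ℤ × ℤ)} {m : ℤ} (hA : ∀ p ∈ A, p.1 ≤ m) (hB : ∀ q ∈ B, m < q.1) :
    cutStrength str α A B ≤ g * (A.image Prod.snd).card :=
  (cutStrength_le_mul_card_adj hg α A B).trans
    (Nat.mul_le_mul_left g (card_adj_le_card_image_snd hA hB))

/-- The restriction of an assembly to a connected part of its domain. -/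
noncomputable def Assembly.restrict (α : Assembly G T) (S : Finset (ℤ × ℤ)) (hS : S ⊆ α.dom)
    (hconn : ConnectedIn (S : Set (ℤ × ℤ))) : Assembly G T where
  tiles p := if p ∈ S then α.tiles p else none
  dom := S
  mem_dom p := by
    by_cases hp : p ∈ S
    · simpa [hp] using (α.mem_dom p).1 (hS hp)
    · simp [hp]
  connected := hconn
  tiles_mem p t ht := by
    split_ifs at ht
    exact α.tiles_mem p t ht

lemma sameSupertile_refl (α : Assembly G T) : SameSupertile α α :=
  ⟨0, fun p => by rw [add_zero]⟩

/-- An assembly whose supertile admits no break at temperature function `τ`: the part of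
terminality that concerns the assembly alone. -/
def Unbreakable (str : G → ℕ) (τ : ℕ → ℕ) (α : Assembly G T) : Prop :=
  ∀ β γ : Assembly G T, ¬ BreaksTo str τ α β γ

lemma Terminal.unbreakable {τ : ℕ → ℕ} {α : Assembly G T} (hα : Terminal str T τ α) :
    Unbreakable str τ α :=
  hα.2.2

namespace Unbreakable

variable {τ : ℕ → ℕ} {α : Assembly G T}

lemma temperature_le_cutStrength (hα : Unbreakable str τ α) {A B : Finset (ℤ × ℤ)}
    (hA : ConnectedIn (A : Set (ℤ × ℤ))) (hB : ConnectedIn (B : Set (ℤ × ℤ)))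
    (hdisj : Disjoint A B) (hdom : α.dom = A ∪ B) :
    τ (min A.card B.card) ≤ cutStrength str α A B := by
  by_contra! hlt
  let β := α.restrict A (hdom ▸ Finset.subset_union_left) hA
  let γ := α.restrict B (hdom ▸ Finset.subset_union_right) hB
  exact hα β γ ⟨β, γ, α, sameSupertile_refl β, sameSupertile_refl γ, sameSupertile_refl α,
    ⟨hdisj, hdom, fun _ hp => (if_pos hp).symm, fun _ hp => (if_pos hp).symm⟩, hlt⟩

lemma temperature_le_of_rect (hg : ∀ a, str a ≤ g) (hα : Unbreakable str τ α) {v : ℤ × ℤ}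
    {w h m : ℕ} (hdom : (α.dom : Set (ℤ × ℤ)) = (· + v) '' rect w h) (hm : 2 * m ≤ w) :
    τ (m * h) ≤ g * h := by
  let rows := Finset.Icc (v.2 + 1) (v.2 + h)
  let A := Finset.Icc (v.1 + 1) (v.1 + m) ×ˢ rows
  let B := Finset.Icc (v.1 + m + 1) (v.1 + w) ×ˢ rows
  have hrows : rows.card = h := by simp [rows]
  have hA : ConnectedIn (A : Set (ℤ × ℤ)) := by
    simpa [A, rows] using connectedIn_prod (Set.Icc _ _) (Set.Icc _ _)
  have hB : ConnectedIn (B : Set (ℤ × ℤ)) := by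
    simpa [B, rows] using connectedIn_prod (Set.Icc _ _) (Set.Icc _ _)
  have hleft : ∀ p ∈ A, p.1 ≤ v.1 + m := fun p hp =>
    (Finset.mem_Icc.1 (Finset.mem_product.1 hp).1).2
  have hright : ∀ q ∈ B, v.1 + m < q.1 := fun q hq =>
    (Finset.mem_Icc.1 (Finset.mem_product.1 hq).1).1
  have hdisj : Disjoint A B := Finset.disjoint_left.2 fun p hpA hpB =>
    (hleft p hpA).not_gt (hright p hpB)
  have hunion : α.dom = A ∪ B := by
    ext p
    rw [← Finset.mem_coe, hdom, image_add_rect]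
    simp only [A, B, rows, Finset.mem_union, Finset.mem_product, Finset.mem_Icc, Set.mem_prod,
      Set.mem_Icc]
    omega
  have hcard : min A.card B.card = m * h := by
    have hcols : m ≤ w - m := by omega
    simp [A, B, hrows, hcols]
  calc τ (m * h) = τ (min A.card B.card) := by rw [hcard]
    _ ≤ cutStrength str α A B := hα.temperature_le_cutStrength hA hB hdisj hunion
    _ ≤ g * (A.image Prod.snd).card := cutStrength_le_mul_card_image_snd hg α hleft hright
    _ ≤ g * rows.card :=
        Nat.mul_le_mul_left g (Finset.card_le_card Finset.subset_product_image_snd)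
    _ = g * h := by rw [hrows]

end Unbreakable

lemma le_two_mul_sqrt_half_mul_self {k : ℕ} (hk : 2 ≤ k) :
    (k : ℝ) ≤ 2 * √(k / 2 * k : ℕ) := by
  have hquarter : k * k ≤ 2 ^ 2 * (k / 2 * k) := by
    rw [← mul_assoc]
    exact Nat.mul_le_mul_right k (by omega)
  calc (k : ℝ) = √(k * k : ℕ) := by rw [Nat.cast_mul, Real.sqrt_mul_self k.cast_nonneg]
    _ ≤ √(2 ^ 2 * (k / 2 * k) : ℕ) := Real.sqrt_le_sqrt (mod_cast hquarter)
    _ = 2 * √(k / 2 * k : ℕ) := by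
        rw [Nat.cast_mul, Nat.cast_pow, Nat.cast_ofNat, Real.sqrt_mul (by positivity),
          Real.sqrt_sq zero_le_two]

lemma Unbreakable.exists_temperature_le_sqrt (hg : ∀ a, str a ≤ g) {τ : ℕ → ℕ}
    {α : Assembly G T} (hα : Unbreakable str τ α) {v : ℤ × ℤ} {k : ℕ} (hk : 2 ≤ k)
    (hdom : (α.dom : Set (ℤ × ℤ)) = (· + v) '' rect k k) :
    ∃ n ≥ k, (τ n : ℝ) ≤ 2 * g * √n := by
  refine ⟨k / 2 * k, Nat.le_mul_of_pos_left k (by omega), ?_⟩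
  have hcut : τ (k / 2 * k) ≤ g * k := hα.temperature_le_of_rect hg hdom (Nat.mul_div_le k 2)
  calc (τ (k / 2 * k) : ℝ) ≤ g * k := mod_cast hcut
    _ ≤ g * (2 * √(k / 2 * k : ℕ)) := by gcongr; exact le_two_mul_sqrt_half_mul_self hk
    _ = 2 * g * √(k / 2 * k : ℕ) := by ring

end

theorem square_temperature_not_omega_sqrt_general {ι : Sort*} {G : Type} (str : G → ℕ) (g : ℕ)
    (hg : ∀ a : G, str a ≤ g) (T : Set (Tile G)) (τ : ι → ℕ → ℕ)
    (k : ι → ℕ) (hk : ¬ BddAbove (Set.range k))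
    (hsquare : ∀ i, ∃ α : Assembly G T, Unbreakable str (τ i) α ∧
      ∃ v : ℤ × ℤ, (α.dom : Set (ℤ × ℤ)) = (· + v) '' rect (k i) (k i)) :
    ¬ (∀ C : ℝ, 0 < C → ∃ N : ℕ, ∀ n : ℕ, N ≤ n →
        C * Real.sqrt n < ((⨅ i, τ i n : ℕ) : ℝ)) := by
  intro hω
  obtain ⟨N, hN⟩ := hω (2 * g + 1) (by positivity)
  obtain ⟨_, ⟨i, rfl⟩, hi⟩ := not_bddAbove_iff.1 hk (max N 2)
  obtain ⟨hNk, hk2⟩ := max_lt_iff.1 hi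
  obtain ⟨α, hα, v, hdom⟩ := hsquare i
  obtain ⟨n, hkn, hτ⟩ := hα.exists_temperature_le_sqrt hg hk2.le hdom
  have hinf : ⨅ j, τ j n ≤ τ i n := ciInf_le (OrderBot.bddBelow _) i
  refine lt_irrefl ((2 * g + 1) * √n) ?_
  calc (2 * g + 1) * √n < ((⨅ j, τ j n : ℕ) : ℝ) := hN n (hNk.le.trans hkn)
    _ ≤ τ i n := mod_cast hinf
    _ ≤ 2 * g * √n := hτ
    _ ≤ (2 * g + 1) * √n := by gcongr; linarith

/-- If `T` is a finite tile set over a glue alphabet in which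
every glue has strength at most `g`, and `τ₁, τ₂, …` are nondecreasing
temperature functions and `k₁, k₂, …` pairwise distinct integers with `kᵢ ≥ 2`
such that each `(T, τᵢ)` has a terminal supertile and self-assembles the
`kᵢ × kᵢ` square, then `f(n) = infᵢ τᵢ(n)` is not `ω(√n)`. -/
theorem square_temperature_not_omega_sqrt {G : Type} (str : G → ℕ) (g : ℕ)
    (hg : ∀ a : G, str a ≤ g) (T : Set (Tile G)) (hT : T.Finite)
    (τ : ℕ → ℕ → ℕ) (hτ : ∀ i, Monotone (τ i))
    (k : ℕ → ℕ) (hk : Function.Injective k) (hk2 : ∀ i, 2 ≤ k i)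
    (hsys : ∀ i : ℕ,
      (∃ α : Assembly G T, Terminal str T (τ i) α) ∧
      SelfAssembles str T (τ i) (rect (k i) (k i))) :
    ¬ (∀ C : ℝ, 0 < C → ∃ N : ℕ, ∀ n : ℕ, N ≤ n →
        C * Real.sqrt n < ((⨅ i : ℕ, τ i n : ℕ) : ℝ)) :=
  square_temperature_not_omega_sqrt_general str g hg T τ k
    (Set.infinite_range_of_injective hk).not_bddAbove
    fun i => let ⟨⟨α, hα⟩, hsq⟩ := hsys i; ⟨α, hα.unbreakable, hsq α hα⟩
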